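/- Let S ∈ ℝ^{N×N} be symmetric positive definite, A : ℝ^N → ℝ^{N×N} a state-dependent matrix-valued map, B ∈ ℝ^{N×m}, C ∈ ℝ^{m×N}, b ∈ ℝ^N, c ∈ ℝ^N, ν, ρ ∈ ℝ, and X ⊆ ℝ^N. Assume that for every y ∈ X the symmetric block matrix [[A(y)ᵀS + SA(y) + ρ c cᵀ, SB − Cᵀ, Sb − c],[BᵀS − C, 0, 0],[bᵀS − cᵀ, 0, ν]] is negative semidefinite. Then for every x ∈ X, u ∈ ℝ^m and λ ∈ ℝ: 2 xᵀ S (A(x) x + B u + b λ) ≤ 2 uᵀ C x + 2 λ (cᵀ x) − ν λ² − ρ (cᵀ x)². In particular, the system ẋ = A(x)x + Bu + bλ with outputs Cx and cᵀx is input-feedforward and output-feedback passive with respect to both ports, with passivity indices ν and ρ for the port (λ, cᵀx). -/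

import Mathlib

open Matrix

/-- A real matrix `M` is negative semidefinite if it is symmetric and its quadratic
form is nonpositive. -/
def Matrix.NegSemidefR {ι : Type*} [Fintype ι] (M : Matrix ι ι ℝ) : Prop :=
  Mᵀ = M ∧ ∀ z : ι → ℝ, z ⬝ᵥ M.mulVec z ≤ 0

/-!
Stack the two ports into one, with input `w = (u, λ)` and output `y = (C x, cᵀ x)`. As `S` is
symmetric, the quadratic form of the LMI matrix at `(x, w)` is the rate of change of the storage
`xᵀ S x` along the dynamics minus the supply rate `2 wᵀ y - ν λ² - ρ (cᵀ x)²`.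
-/

theorem dotProduct_mulVec_comm_of_isSymm {n R : Type*} [Fintype n] [CommSemiring R]
    {S : Matrix n n R} (hS : S.IsSymm) (v w : n → R) : v ⬝ᵥ S *ᵥ w = w ⬝ᵥ S *ᵥ v := by
  simpa only [hS.eq] using dotProduct_transpose_mulVec S v w

theorem sumElim_dotProduct_fromBlocks_mulVec_sumElim {k l n p R : Type*} [Fintype k] [Fintype l]
    [Fintype n] [Fintype p] [NonUnitalNonAssocSemiring R] (A : Matrix k n R) (B : Matrix k p R)
    (C : Matrix l n R) (D : Matrix l p R) (x : k → R) (w : l → R) (y : n → R) (v : p → R) :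
    Sum.elim x w ⬝ᵥ fromBlocks A B C D *ᵥ Sum.elim y v =
      x ⬝ᵥ A *ᵥ y + x ⬝ᵥ B *ᵥ v + (w ⬝ᵥ C *ᵥ y + w ⬝ᵥ D *ᵥ v) := by
  simp only [fromBlocks_mulVec, Sum.elim_comp_inl, Sum.elim_comp_inr,
    sumElim_dotProduct_sumElim, dotProduct_add]

section

variable {n p R : Type*} [Fintype n] [Fintype p] [CommRing R]

/-- The matrix of the linear matrix inequality of `ẋ = A x + G w`, `y = H x` for the storage
`xᵀ S x`: its negative semidefiniteness certifies dissipativity with supply rate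
`2 wᵀ y - wᵀ N w - yᵀ P y`, so `N` and `P` are the input-feedforward and output-feedback passivity
indices, as matrices over all ports at once. -/
def passivityMatrix (S A : Matrix n n R) (G : Matrix n p R) (H : Matrix p n R)
    (N P : Matrix p p R) : Matrix (n ⊕ p) (n ⊕ p) R :=
  fromBlocks (Aᵀ * S + S * A + Hᵀ * P * H) (S * G - Hᵀ) (Gᵀ * S - H) N

theorem dotProduct_passivityMatrix_mulVec {S : Matrix n n R} (hS : S.IsSymm)
    (A : Matrix n n R) (G : Matrix n p R) (H : Matrix p n R) (N P : Matrix p p R)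
    (x : n → R) (w : p → R) :
    Sum.elim x w ⬝ᵥ passivityMatrix S A G H N P *ᵥ Sum.elim x w =
      2 * (x ⬝ᵥ S *ᵥ (A *ᵥ x + G *ᵥ w)) -
        (2 * (w ⬝ᵥ H *ᵥ x) - w ⬝ᵥ N *ᵥ w - H *ᵥ x ⬝ᵥ P *ᵥ H *ᵥ x) := by
  have state_block : x ⬝ᵥ (Aᵀ * S + S * A + Hᵀ * P * H) *ᵥ x =
      2 * (x ⬝ᵥ S *ᵥ A *ᵥ x) + H *ᵥ x ⬝ᵥ P *ᵥ H *ᵥ x := by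
    simp only [add_mulVec, dotProduct_add, ← mulVec_mulVec, dotProduct_transpose_mulVec]
    rw [dotProduct_comm (S *ᵥ x), dotProduct_mulVec_comm_of_isSymm hS,
      dotProduct_comm (P *ᵥ H *ᵥ x)]
    ring
  have input_block : x ⬝ᵥ (S * G - Hᵀ) *ᵥ w = x ⬝ᵥ S *ᵥ G *ᵥ w - w ⬝ᵥ H *ᵥ x := by
    rw [sub_mulVec, dotProduct_sub, ← mulVec_mulVec, dotProduct_transpose_mulVec]
  have output_block : w ⬝ᵥ (Gᵀ * S - H) *ᵥ x = x ⬝ᵥ S *ᵥ G *ᵥ w - w ⬝ᵥ H *ᵥ x := by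
    rw [sub_mulVec, dotProduct_sub, ← mulVec_mulVec, dotProduct_transpose_mulVec,
      dotProduct_comm (S *ᵥ x), dotProduct_mulVec_comm_of_isSymm hS]
  rw [passivityMatrix, sumElim_dotProduct_fromBlocks_mulVec_sumElim, state_block, input_block,
    output_block, mulVec_add, dotProduct_add]
  ring

end

theorem storageRate_le_supplyRate_of_negSemidefR {n p : Type*} [Fintype n] [Fintype p]
    {S A : Matrix n n ℝ} {G : Matrix n p ℝ} {H : Matrix p n ℝ} {N P : Matrix p p ℝ}
    (hS : S.IsSymm) (hM : (passivityMatrix S A G H N P).NegSemidefR) (x : n → ℝ) (w : p → ℝ) :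
    2 * (x ⬝ᵥ S *ᵥ (A *ᵥ x + G *ᵥ w)) ≤
      2 * (w ⬝ᵥ H *ᵥ x) - w ⬝ᵥ N *ᵥ w - H *ᵥ x ⬝ᵥ P *ᵥ H *ᵥ x := by
  rw [← sub_nonpos, ← dotProduct_passivityMatrix_mulVec hS]
  exact hM.2 _

section

variable {n m R : Type*}

/-- The input matrix `[B b]` of the two ports; `Fin 1` indexes the scalar economic port. -/
def portInput (B : Matrix n m R) (b : n → R) : Matrix n (m ⊕ Fin 1) R :=
  fromCols B (replicateCol (Fin 1) b)

/-- The output matrix `[C; cᵀ]` of the two ports. -/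
def portOutput (C : Matrix m n R) (c : n → R) : Matrix (m ⊕ Fin 1) n R :=
  fromRows C (replicateRow (Fin 1) c)

/-- The passivity index `diag(0, r)` over both ports, with index `r` at the economic port and `0`
at the electric one. -/
def economicPortIndex [Zero R] (m : Type*) (r : R) : Matrix (m ⊕ Fin 1) (m ⊕ Fin 1) R :=
  fromBlocks 0 0 0 (of fun _ _ => r)

variable [CommRing R]

/-- The matrix of the linear matrix inequality of the microgrid at a state with `A(x) = A`, written
out blockwise as
`[[AᵀS + SA + ρ c cᵀ, SB - Cᵀ, Sb - c], [BᵀS - C, 0, 0], [bᵀS - cᵀ, 0, ν]]`. -/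
def economicPortMatrix [Fintype n] (S A : Matrix n n R) (B : Matrix n m R) (C : Matrix m n R)
    (b c : n → R) (ν ρ : R) : Matrix (n ⊕ (m ⊕ Fin 1)) (n ⊕ (m ⊕ Fin 1)) R :=
  fromBlocks
    (Aᵀ * S + S * A + ρ • vecMulVec c c)
    (of fun i => Sum.elim ((S * B - Cᵀ) i) fun _ => (S *ᵥ b - c) i)
    (of fun i j => Sum.elim (fun i' => (Bᵀ * S - C) i' j) (fun _ => (b ᵥ* S - c) j) i)
    (economicPortIndex m ν)

theorem portInput_mulVec_sumElim [Fintype m] (B : Matrix n m R) (b : n → R) (u : m → R) (l : R) :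
    portInput B b *ᵥ Sum.elim u (fun _ => l) = B *ᵥ u + l • b := by
  rw [portInput, fromCols_mulVec_sumElim]
  ext i
  simp [mulVec, dotProduct, mul_comm]

theorem portOutput_mulVec [Fintype n] (C : Matrix m n R) (c x : n → R) :
    portOutput C c *ᵥ x = Sum.elim (C *ᵥ x) (fun _ => c ⬝ᵥ x) := by
  rw [portOutput, fromRows_mulVec, replicateRow_mulVec_eq_const]
  rfl

theorem dotProduct_economicPortIndex_mulVec [Fintype m] (r l : R) (u : m → R) :
    Sum.elim u (fun _ => l) ⬝ᵥ economicPortIndex m r *ᵥ Sum.elim u (fun _ => l) = r * l ^ 2 := by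
  rw [economicPortIndex, sumElim_dotProduct_fromBlocks_mulVec_sumElim]
  simp only [zero_mulVec, dotProduct_zero, zero_add]
  simp only [dotProduct, mulVec, Fin.sum_univ_one, of_apply]
  ring

theorem transpose_portOutput_mul_economicPortIndex_mul [Fintype m] (C : Matrix m n R)
    (c : n → R) (r : R) :
    (portOutput C c)ᵀ * economicPortIndex m r * portOutput C c = r • vecMulVec c c := by
  rw [portOutput, economicPortIndex, transpose_fromRows, fromCols_mul_fromBlocks,
    fromCols_mul_fromRows]
  simp only [Matrix.mul_zero, Matrix.zero_mul, add_zero, zero_add, transpose_replicateRow]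
  ext i j
  simp only [mul_apply, Fin.sum_univ_one, replicateCol_apply, replicateRow_apply, of_apply,
    Matrix.smul_apply, vecMulVec_apply, smul_eq_mul]
  ring

theorem economicPortMatrix_eq_passivityMatrix [Fintype n] [Fintype m] (S A : Matrix n n R)
    (B : Matrix n m R) (C : Matrix m n R) (b c : n → R) (ν ρ : R) :
    economicPortMatrix S A B C b c ν ρ =
      passivityMatrix S A (portInput B b) (portOutput C c) (economicPortIndex m ν)
        (economicPortIndex m ρ) := by
  rw [economicPortMatrix, passivityMatrix, transpose_portOutput_mul_economicPortIndex_mul]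
  congr 1
  · ext i (j | j) <;> rfl
  · ext (i | i) j <;> rfl

end

theorem economic_port_passivity_general {n m : Type*} [Fintype n] [Fintype m]
    (S : Matrix n n ℝ) (hS : S.IsSymm) (A : (n → ℝ) → Matrix n n ℝ)
    (B : Matrix n m ℝ) (C : Matrix m n ℝ) (b c : n → ℝ) (ν ρ : ℝ) (X : Set (n → ℝ))
    (hLMI : ∀ y ∈ X, (economicPortMatrix S (A y) B C b c ν ρ).NegSemidefR) :
    ∀ x ∈ X, ∀ (u : m → ℝ) (lam : ℝ),
      2 * (x ⬝ᵥ S *ᵥ (A x *ᵥ x + B *ᵥ u + lam • b)) ≤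
        2 * (u ⬝ᵥ C *ᵥ x) + 2 * lam * (c ⬝ᵥ x) - ν * lam ^ 2 - ρ * (c ⬝ᵥ x) ^ 2 := by
  intro x hx u lam
  have hM := economicPortMatrix_eq_passivityMatrix S (A x) B C b c ν ρ ▸ hLMI x hx
  have supply : Sum.elim u (fun _ : Fin 1 => lam) ⬝ᵥ portOutput C c *ᵥ x =
      u ⬝ᵥ C *ᵥ x + lam * (c ⬝ᵥ x) := by
    simp [portOutput_mulVec, dotProduct]
  have dissipation :=
    storageRate_le_supplyRate_of_negSemidefR hS hM x (Sum.elim u fun _ => lam)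
  rw [supply, portInput_mulVec_sumElim, portOutput_mulVec, dotProduct_economicPortIndex_mulVec,
    dotProduct_economicPortIndex_mulVec, ← add_assoc] at dissipation
  linarith

/-- **LMI certificate of input-feedforward output-feedback passivity of the electric
and economic ports.**  If for every `y ∈ X` the block matrix
`[[A(y)ᵀS + SA(y) + ρ c cᵀ, SB − Cᵀ, Sb − c], [BᵀS − C, 0, 0], [bᵀS − cᵀ, 0, ν]]`
is negative semidefinite, then for every state `x ∈ X`, electric-port input `u` and
economic-port input `λ`,
`2 xᵀ S (A(x) x + B u + b λ) ≤ 2 uᵀ C x + 2 λ (cᵀ x) − ν λ² − ρ (cᵀ x)²`,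
i.e. the system `ẋ = A(x)x + Bu + bλ` with outputs `Cx` and `cᵀx` is
input-feedforward and output-feedback passive w.r.t. both ports with indices `ν`, `ρ`
for the economic port. -/
theorem economic_port_passivity
    (N m : ℕ)
    (S : Matrix (Fin N) (Fin N) ℝ) (hS : S.PosDef)
    (A : (Fin N → ℝ) → Matrix (Fin N) (Fin N) ℝ)
    (B : Matrix (Fin N) (Fin m) ℝ) (C : Matrix (Fin m) (Fin N) ℝ)
    (b : Fin N → ℝ) (c : Fin N → ℝ) (ν ρ : ℝ)
    (X : Set (Fin N → ℝ))
    (hLMI : ∀ y ∈ X,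
      (Matrix.fromBlocks
        ((A y)ᵀ * S + S * A y + ρ • Matrix.vecMulVec c c)
        (Matrix.of fun i j => Sum.elim (fun j' => (S * B - Cᵀ) i j')
          (fun _ : Fin 1 => (S.mulVec b - c) i) j)
        (Matrix.of fun i j => Sum.elim (fun i' => (Bᵀ * S - C) i' j)
          (fun _ : Fin 1 => (b ᵥ* S - c) j) i)
        (Matrix.fromBlocks (0 : Matrix (Fin m) (Fin m) ℝ) 0 0
          (Matrix.of fun _ _ : Fin 1 => ν))).NegSemidefR)
    :
    ∀ x ∈ X, ∀ (u : Fin m → ℝ) (lam : ℝ),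
      2 * (x ⬝ᵥ S.mulVec ((A x).mulVec x + B.mulVec u + lam • b)) ≤
        2 * (u ⬝ᵥ C.mulVec x) + 2 * lam * (c ⬝ᵥ x) - ν * lam ^ 2 - ρ * (c ⬝ᵥ x) ^ 2 := by
  exact economic_port_passivity_general S (isHermitian_iff_isSymm.mp hS.isHermitian) A B C b c ν ρ
    X hLMI
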